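/- Let T > 0, let q : ℝ → ℝ be T-periodic and locally integrable satisfying (q*), and let g ∈ C¹([0,∞)) satisfy (g*). Define f : ℝ × ℝ → ℝ by f(t,s) = −s for s ≤ 0 and f(t,s) = q(t) g(s) for s ≥ 0. Then every T-periodic solution u of u'' + f(t,u) = 0 satisfies u(t) ≥ 0 for all t ∈ ℝ, and if moreover u is not identically zero then u(t) > 0 for all t ∈ ℝ; in particular, every nontrivial T-periodic solution of u'' + f(t,u) = 0 is a positive T-periodic solution of u'' + q(t) g(u) = 0. -/

import Mathlib

open MeasureTheory Set Filter

/-- `u` is a solution of `u'' + F(t,u) = 0`: `u` is of class `C¹` and its derivative `u'`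
is locally absolutely continuous (it is the integral of a locally integrable function),
with `u'' + F(t, u(t)) = 0` for a.e. `t`. -/
def IsSol (F : ℝ → ℝ → ℝ) (u : ℝ → ℝ) : Prop :=
  ∃ u' : ℝ → ℝ,
    (∀ t, HasDerivAt u (u' t) t) ∧
    MeasureTheory.LocallyIntegrable (fun s => F s (u s)) MeasureTheory.volume ∧
    ∀ t, u' t = u' 0 - ∫ s in (0:ℝ)..t, F s (u s)

/-- `q ≻ 0` on `I` : `q ≥ 0` a.e. on `I` and `q ≢ 0` on `I`. -/
def PosOn (q : ℝ → ℝ) (I : Set ℝ) : Prop :=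
  (∀ᵐ t ∂(MeasureTheory.volume.restrict I), 0 ≤ q t) ∧
  ¬ (∀ᵐ t ∂(MeasureTheory.volume.restrict I), q t = 0)

/-- Condition `(q*)`: `[0,T]` splits into `m` closed intervals where `q ≻ 0`
separated by `m` closed intervals where `q ≺ 0`. -/
def SignCond (q : ℝ → ℝ) (T : ℝ) (m : ℕ) : Prop :=
  ∃ σ : ℕ → ℝ, σ 0 = 0 ∧ σ (2*m) = T ∧ (∀ i < 2*m, σ i < σ (i+1)) ∧
    (∀ i < m, PosOn q (Set.Icc (σ (2*i)) (σ (2*i+1)))) ∧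
    (∀ i < m, PosOn (fun t => - q t) (Set.Icc (σ (2*i+1)) (σ (2*i+2))))

/-- A subharmonic solution of order `k`: `kT`-periodic but not `ℓT`-periodic
for `ℓ = 1, …, k-1`. -/
def IsSubharmonic (u : ℝ → ℝ) (T : ℝ) (k : ℕ) : Prop :=
  Function.Periodic u (k * T) ∧ ∀ ℓ : ℕ, 1 ≤ ℓ → ℓ < k → ¬ Function.Periodic u (ℓ * T)

/-- `u` and `v` belong to the same periodicity class. -/
def SameClass (u v : ℝ → ℝ) (T : ℝ) : Prop :=
  ∃ ℓ : ℤ, ∀ t, v t = u (t + ℓ * T)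

/-!
At a negative minimum `t₀` the equation reads `u'' = u < 0` nearby, so `u` decreases strictly to the
right of `t₀`, which is absurd; hence periodic solutions are nonnegative. If a nonnegative solution
vanishes at `t₀`, then so does `u'`, and `|u''| ≤ a(t) |u|` near `t₀` with `a` locally integrable.
Integrating twice, the maximum `M` of `|u|` on `[t₀ - ε, t₀ + ε]` satisfies `M ≤ ε M ∫ |a|`, so
`M = 0` for small `ε`. Thus the zero set of `u` is open as well as closed.
-/

open scoped Topology

/-- `F(t, s) = O(s)` as `s → 0⁺` with a coefficient locally integrable in `t`. This is what replaces
a Lipschitz condition at the trivial solution when `F` is only of Carathéodory type. -/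
def IsLinearlyDominated (F : ℝ → ℝ → ℝ) : Prop :=
  ∃ a : ℝ → ℝ, LocallyIntegrable a volume ∧
    ∃ δ > 0, ∀ᵐ t, ∀ s ∈ Ioo 0 δ, |F t s| ≤ a t * s

lemma isLinearlyDominated_mul {q g : ℝ → ℝ} (hq : LocallyIntegrable q volume)
    (hg : DifferentiableWithinAt ℝ g (Ici 0) 0) (hg0 : g 0 = 0) :
    IsLinearlyDominated fun t s => q t * g s := by
  obtain ⟨C, hC⟩ := hg.isBigO_sub.bound
  obtain ⟨δ, hδ, hCδ⟩ := Metric.eventually_nhds_iff.1 (eventually_nhdsWithin_iff.1 hC)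
  have ha : LocallyIntegrable (fun t => C * |q t|) volume := .smul (fun t => (hq t).norm) C
  refine ⟨_, ha, δ, hδ, .of_forall fun t s hs => ?_⟩
  have hgs : |g s| ≤ C * s := by
    simpa [hg0, abs_of_pos hs.1] using
      hCδ (y := s) (by simpa [abs_of_pos hs.1] using hs.2) hs.1.le
  calc |q t * g s| = |q t| * |g s| := abs_mul _ _
    _ ≤ |q t| * (C * s) := by gcongr
    _ = C * |q t| * s := by ring

lemma IsLinearlyDominated.truncate {φ : ℝ → ℝ → ℝ} (hφ : IsLinearlyDominated φ) :
    IsLinearlyDominated fun t s => if s ≤ 0 then -s else φ t s := by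
  obtain ⟨a, ha, δ, hδ, hφa⟩ := hφ
  refine ⟨a, ha, δ, hδ, hφa.mono fun t ht s hs => ?_⟩
  simpa only [if_neg hs.1.not_ge] using ht s hs

namespace IsSol

variable {F G : ℝ → ℝ → ℝ} {u : ℝ → ℝ}

lemma differentiable (hu : IsSol F u) : Differentiable ℝ u := by
  obtain ⟨u', hderiv, -⟩ := hu
  exact fun t => (hderiv t).differentiableAt

lemma intervalIntegrable (hu : IsSol F u) (s t : ℝ) :
    IntervalIntegrable (fun r => F r (u r)) volume s t := by
  obtain ⟨-, -, hloc, -⟩ := hu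
  exact (hloc.integrableOn_isCompact isCompact_uIcc).intervalIntegrable

lemma deriv_eq_sub_integral (hu : IsSol F u) (s t : ℝ) :
    deriv u t = deriv u s - ∫ r in s..t, F r (u r) := by
  have hadj := intervalIntegral.integral_add_adjacent_intervals
    (hu.intervalIntegrable 0 s) (hu.intervalIntegrable s t)
  obtain ⟨u', hderiv, -, hint⟩ := hu
  rw [(hderiv t).deriv, (hderiv s).deriv]
  linarith [hint s, hint t]

lemma congr (hu : IsSol F u) (hFG : ∀ t, F t (u t) = G t (u t)) : IsSol G u := by
  simpa only [IsSol, hFG] using hu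

lemma nonneg_of_isLocalMin (hu : IsSol F u) (hF : ∀ t, ∀ s < 0, 0 < F t s) {t₀ : ℝ}
    (hmin : IsLocalMin u t₀) : 0 ≤ u t₀ := by
  by_contra! hneg
  have hcont := hu.differentiable.continuous
  obtain ⟨δ, hδ, hnear⟩ := Metric.eventually_nhds_iff.1
    (hmin.and (hcont.continuousAt.eventually_lt_const hneg))
  have hball : ∀ t ∈ Ioo t₀ (t₀ + δ), u t₀ ≤ u t ∧ u t < 0 := fun t ht =>
    hnear (by rw [Real.dist_eq, abs_lt]; constructor <;> linarith [ht.1, ht.2])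
  have hderiv_neg : ∀ t ∈ Ioo t₀ (t₀ + δ), deriv u t < 0 := fun t ht => by
    have hpos : 0 < ∫ s in t₀..t, F s (u s) :=
      intervalIntegral.intervalIntegral_pos_of_pos_on (hu.intervalIntegrable _ _)
        (fun s hs => hF s _ (hball s ⟨hs.1, hs.2.trans ht.2⟩).2) ht.1
    rw [hu.deriv_eq_sub_integral t₀ t, hmin.deriv_eq_zero]
    linarith
  have hanti : StrictAntiOn u (Icc t₀ (t₀ + δ)) :=
    strictAntiOn_of_deriv_neg (convex_Icc _ _) hcont.continuousOn (by rwa [interior_Icc])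
  have hmid : t₀ + δ / 2 ∈ Ioo t₀ (t₀ + δ) := ⟨by linarith, by linarith⟩
  exact (hball _ hmid).1.not_gt
    (hanti (left_mem_Icc.2 (by linarith)) (Ioo_subset_Icc_self hmid) hmid.1)

theorem nonneg_of_periodic (hu : IsSol F u) (hF : ∀ t, ∀ s < 0, 0 < F t s) {T : ℝ} (hT : T ≠ 0)
    (hper : Function.Periodic u T) (t : ℝ) : 0 ≤ u t := by
  obtain ⟨-, ⟨t₀, rfl⟩, hleast⟩ := (hper.compact_of_continuous hT
    hu.differentiable.continuous).exists_isLeast (range_nonempty u)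
  have hmin : ∀ t, u t₀ ≤ u t := fun t => hleast (mem_range_self t)
  exact (hu.nonneg_of_isLocalMin hF (.of_forall hmin)).trans (hmin t)

section UniqueContinuation

variable {a : ℝ → ℝ} {t₀ δ : ℝ}

lemma abs_deriv_le (hu : IsSol F u) (ha : LocallyIntegrable a volume)
    (hFa : ∀ᵐ t, t ∈ Icc (t₀ - δ) (t₀ + δ) → |F t (u t)| ≤ a t * |u t|)
    (hderiv : deriv u t₀ = 0) {ε M : ℝ} (hεδ : ε ≤ δ)
    (hM : ∀ t ∈ Icc (t₀ - ε) (t₀ + ε), |u t| ≤ M) {t : ℝ} (ht : t ∈ Icc (t₀ - ε) (t₀ + ε)) :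
    |deriv u t| ≤ M * ∫ s in Icc (t₀ - δ) (t₀ + δ), |a s| := by
  have hM0 : 0 ≤ M := (abs_nonneg _).trans (hM t ht)
  have hsubε : uIoc t₀ t ⊆ Icc (t₀ - ε) (t₀ + ε) := uIoc_subset_uIcc.trans
    (uIcc_subset_Icc ⟨by linarith [ht.1, ht.2], by linarith [ht.1, ht.2]⟩ ht)
  have hsubδ : uIoc t₀ t ⊆ Icc (t₀ - δ) (t₀ + δ) :=
    hsubε.trans (Icc_subset_Icc (by linarith) (by linarith))
  have haδ : IntegrableOn (fun s => |a s|) (Icc (t₀ - δ) (t₀ + δ)) :=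
    (ha.integrableOn_isCompact isCompact_Icc).abs
  have hFM : ∀ᵐ s, s ∈ uIoc t₀ t → |F s (u s)| ≤ M * |a s| := by
    filter_upwards [hFa] with s hs hst
    calc |F s (u s)| ≤ a s * |u s| := hs (hsubδ hst)
      _ ≤ |a s| * M := mul_le_mul (le_abs_self _) (hM s (hsubε hst)) (abs_nonneg _) (abs_nonneg _)
      _ = M * |a s| := mul_comm _ _
  calc |deriv u t| = |∫ s in t₀..t, F s (u s)| := by
        rw [hu.deriv_eq_sub_integral t₀ t, hderiv, zero_sub, abs_neg]
    _ ≤ ∫ s in uIoc t₀ t, |F s (u s)| :=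
        intervalIntegral.norm_integral_le_integral_norm_uIoc (f := fun s => F s (u s))
    _ ≤ ∫ s in uIoc t₀ t, M * |a s| :=
        setIntegral_mono_on_ae (hu.intervalIntegrable t₀ t).def'.abs
          ((haδ.mono_set hsubδ).const_mul M) measurableSet_uIoc hFM
    _ = M * ∫ s in uIoc t₀ t, |a s| := integral_const_mul _ _
    _ ≤ M * ∫ s in Icc (t₀ - δ) (t₀ + δ), |a s| := by
        gcongr
        exact .of_forall fun s => abs_nonneg _

theorem eventually_eq_zero (hu : IsSol F u) (ha : LocallyIntegrable a volume) (hδ : 0 < δ)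
    (hFa : ∀ᵐ t, t ∈ Icc (t₀ - δ) (t₀ + δ) → |F t (u t)| ≤ a t * |u t|)
    (hzero : u t₀ = 0) (hderiv : deriv u t₀ = 0) : ∀ᶠ t in 𝓝 t₀, u t = 0 := by
  set A := ∫ s in Icc (t₀ - δ) (t₀ + δ), |a s|
  obtain ⟨ε, ⟨hεδ, hεA⟩, hε : 0 < ε⟩ : ∃ ε, (ε < δ ∧ A * ε < 1) ∧ 0 < ε := by
    have hsmall : ∀ᶠ ε in 𝓝 0, A * ε < 1 :=
      (continuous_const_mul A).continuousAt.eventually_lt_const (by simp)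
    exact ((((eventually_lt_nhds hδ).and hsmall).filter_mono nhdsWithin_le_nhds).and
      (self_mem_nhdsWithin (s := Ioi 0))).exists
  have ht₀ : t₀ ∈ Icc (t₀ - ε) (t₀ + ε) := ⟨by linarith, by linarith⟩
  obtain ⟨t₁, ht₁, hmax⟩ := isCompact_Icc.exists_isMaxOn ⟨t₀, ht₀⟩
    hu.differentiable.continuous.abs.continuousOn
  have hcontract : |u t₁| ≤ |u t₁| * (A * ε) :=
    calc |u t₁| = |u t₁ - u t₀| := by rw [hzero, sub_zero]
      _ ≤ |u t₁| * A * |t₁ - t₀| := (convex_Icc _ _).norm_image_sub_le_of_norm_deriv_le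
          (fun t _ => hu.differentiable t)
          (fun t ht => hu.abs_deriv_le ha hFa hderiv hεδ.le hmax ht) ht₀ ht₁
      _ ≤ |u t₁| * A * ε := 
          mul_le_mul_of_nonneg_left (abs_le.2 ⟨by linarith [ht₁.1], by linarith [ht₁.2]⟩)
            (mul_nonneg (abs_nonneg _) (integral_nonneg fun s => abs_nonneg _))
      _ = |u t₁| * (A * ε) := mul_assoc _ _ _
  have hM : |u t₁| ≤ 0 := by
    by_contra! hpos
    exact hcontract.not_gt (mul_lt_of_lt_one_right hpos hεA)
  filter_upwards [Icc_mem_nhds (show t₀ - ε < t₀ by linarith) (show t₀ < t₀ + ε by linarith)]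
    with t ht
  exact abs_nonpos_iff.1 ((hmax ht).trans hM)

end UniqueContinuation

lemma eventually_eq_zero_of_nonneg (hu : IsSol F u) (hF0 : ∀ t, F t 0 = 0)
    (hF : IsLinearlyDominated F) (hnonneg : ∀ t, 0 ≤ u t) {t₀ : ℝ} (hzero : u t₀ = 0) :
    ∀ᶠ t in 𝓝 t₀, u t = 0 := by
  obtain ⟨a, ha, δ, hδ, hFa⟩ := hF
  have hsmall : ∀ᶠ t in 𝓝 t₀, u t < δ :=
    hu.differentiable.continuous.continuousAt.eventually_lt_const (hzero ▸ hδ)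
  obtain ⟨ε, hε, hball⟩ := Metric.nhds_basis_closedBall.eventually_iff.1 hsmall
  rw [Real.closedBall_eq_Icc] at hball
  have hmin : IsLocalMin u t₀ := .of_forall fun t => hzero ▸ hnonneg t
  refine hu.eventually_eq_zero ha hε ?_ hzero hmin.deriv_eq_zero
  filter_upwards [hFa] with t hFt ht
  rcases (hnonneg t).eq_or_lt with hut | hut
  · simp [← hut, hF0]
  · rw [abs_of_pos hut]
    exact hFt _ ⟨hut, hball ht⟩

theorem pos_of_nonneg (hu : IsSol F u) (hF0 : ∀ t, F t 0 = 0) (hF : IsLinearlyDominated F)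
    (hnonneg : ∀ t, 0 ≤ u t) (hne : ¬ ∀ t, u t = 0) (t : ℝ) : 0 < u t := by
  refine (hnonneg t).lt_of_ne' fun hzero => hne fun s => ?_
  have hclopen : IsClopen {r | u r = 0} :=
    ⟨isClosed_eq hu.differentiable.continuous continuous_const,
      isOpen_iff_eventually.2 fun _ => hu.eventually_eq_zero_of_nonneg hF0 hF hnonneg⟩
  exact eq_univ_iff_forall.1 (hclopen.eq_univ ⟨t, hzero⟩) s

end IsSol

theorem stmt11_general {T : ℝ} (hT : T ≠ 0) {φ : ℝ → ℝ → ℝ} (hφ : IsLinearlyDominated φ)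
    {u : ℝ → ℝ} (hu : IsSol (fun t s => if s ≤ 0 then -s else φ t s) u)
    (huper : Function.Periodic u T) :
    (∀ t, 0 ≤ u t) ∧ (¬ (∀ t, u t = 0) → (∀ t, 0 < u t) ∧ IsSol φ u) := by
  have hnonneg : ∀ t, 0 ≤ u t :=
    hu.nonneg_of_periodic (fun t s hs => by simpa [hs.le] using hs) hT huper
  refine ⟨hnonneg, fun hne => ?_⟩
  have hpos : ∀ t, 0 < u t := hu.pos_of_nonneg (by simp) hφ.truncate hnonneg hne
  exact ⟨hpos, hu.congr fun t => if_neg (hpos t).not_ge⟩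

/-- maximum principle: with `f(t,s) = -s` for `s ≤ 0` and
`f(t,s) = q(t)g(s)` for `s ≥ 0`, every `T`-periodic solution of `u'' + f(t,u) = 0` is
nonnegative, and if nontrivial it is everywhere positive, hence a positive `T`-periodic
solution of `u'' + q(t)g(u) = 0`. -/
theorem stmt11 (T : ℝ) (hT : 0 < T) (q : ℝ → ℝ)
    (hqper : Function.Periodic q T)
    (hqloc : MeasureTheory.LocallyIntegrable q MeasureTheory.volume)
    (m : ℕ) (hm : 1 ≤ m) (hqsign : SignCond q T m)
    (g : ℝ → ℝ) (hgC1 : ContDiffOn ℝ 1 g (Set.Ici 0))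
    (hg0 : g 0 = 0) (hgpos : ∀ s : ℝ, 0 < s → 0 < g s)
    (u : ℝ → ℝ)
    (hu : IsSol (fun t s => if s ≤ 0 then -s else q t * g s) u)
    (huper : Function.Periodic u T) :
    (∀ t, 0 ≤ u t) ∧
    (¬ (∀ t, u t = 0) → (∀ t, 0 < u t) ∧ IsSol (fun t s => q t * g s) u) := by
  have hg : DifferentiableWithinAt ℝ g (Ici 0) 0 := hgC1.differentiableOn one_ne_zero 0 self_mem_Ici
  exact stmt11_general hT.ne' (isLinearlyDominated_mul hqloc hg hg0) hu huper
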